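/- Let d ≥ 2 and let D ⊂ ℝ^d be a strongly convex domain. Then there exist ε > 0 and A ≥ 1 such that for all x ∈ N_ε(∂D) ∩ D and all v ∈ ℝ^d: h_D(x,v) ≥ A^{-1}(‖v_N‖/(2δ_D(x)) + ‖v_T‖/δ_D(x)^{1/2}). -/

import Mathlib

open scoped RealInnerProductSpace ENNReal
open Metric Set Filter

noncomputable section

/-- Euclidean space `ℝ^d`. -/
abbrev Euc (d : ℕ) := EuclideanSpace ℝ (Fin d)

/-- The open unit disk in `ℝ²`. -/
def unitDisk : Set (Euc 2) := Metric.ball 0 1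

/-- Partial derivative of `f` at `z` in the `i`-th coordinate direction. -/
def pd {d : ℕ} (i : Fin 2) (f : Euc 2 → Euc d) (z : Euc 2) : Euc d :=
  fderiv ℝ f z (EuclideanSpace.single i 1)

/-- `f` is a conformal harmonic map on the unit disk: it is `C²`, its (vector)
Laplacian vanishes (equivalently, every component is harmonic), and at each point
its two partial derivatives are orthogonal and of equal norm. -/
def ConformalHarmonicOnDisk {d : ℕ} (f : Euc 2 → Euc d) : Prop :=
  ContDiffOn ℝ 2 f unitDisk ∧
  (∀ z ∈ unitDisk,
    fderiv ℝ (pd 0 f) z (EuclideanSpace.single 0 1)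
      + fderiv ℝ (pd 1 f) z (EuclideanSpace.single 1 1) = 0) ∧
  (∀ z ∈ unitDisk, ‖pd 0 f z‖ = ‖pd 1 f z‖ ∧ ⟪pd 0 f z, pd 1 f z⟫ = 0)

/-- The minimal (Forstnerič–Kalaj) metric of a domain `D ⊆ ℝ^d`:
`g_D(x,v) = inf {1/r : r > 0, f ∈ CH(𝔻, D), f 0 = x, f_x 0 = r • v}`. -/
def minMetric {d : ℕ} (D : Set (Euc d)) (x v : Euc d) : ℝ :=
  sInf {c : ℝ | ∃ r : ℝ, 0 < r ∧ c = 1 / r ∧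
    ∃ f : Euc 2 → Euc d, ConformalHarmonicOnDisk f ∧ (∀ z ∈ unitDisk, f z ∈ D) ∧
      f 0 = x ∧ pd 0 f 0 = r • v}

/-- `γ` is a piecewise `C¹` curve on `[a, b]`. -/
def PiecewiseC1On {d : ℕ} (γ : ℝ → Euc d) (a b : ℝ) : Prop :=
  ContinuousOn γ (Set.Icc a b) ∧
  ∃ (n : ℕ) (t : Fin (n + 2) → ℝ), Monotone t ∧ t 0 = a ∧ t (Fin.last (n + 1)) = b ∧
    ∀ i : Fin (n + 1), ContDiffOn ℝ 1 γ (Set.Icc (t i.castSucc) (t i.succ))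

/-- The minimal pseudodistance `ρ_D`: infimum of minimal lengths of piecewise `C¹`
curves in `D` joining `x` to `y`. -/
def minDist {d : ℕ} (D : Set (Euc d)) (x y : Euc d) : ℝ :=
  sInf {L : ℝ | ∃ γ : ℝ → Euc d, PiecewiseC1On γ 0 1 ∧
    (∀ t ∈ Set.Icc (0:ℝ) 1, γ t ∈ D) ∧ γ 0 = x ∧ γ 1 = y ∧
    L = ∫ t in (0:ℝ)..(1:ℝ), minMetric D (γ t) (deriv γ t)}

/-- The Gromov product `(x|y)_o` with respect to the minimal pseudodistance of `D`. -/
def gromovProd {d : ℕ} (D : Set (Euc d)) (o x y : Euc d) : ℝ :=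
  (minDist D x o + minDist D y o - minDist D x y) / 2

/-- `D` is hyperbolic: the minimal pseudodistance is a genuine distance. -/
def MinHyperbolic {d : ℕ} (D : Set (Euc d)) : Prop :=
  ∀ x ∈ D, ∀ y ∈ D, x ≠ y → 0 < minDist D x y

/-- The Hessian quadratic form of `u` at `x` in direction `v`. -/
def hessQ {d : ℕ} (u : Euc d → ℝ) (x v : Euc d) : ℝ :=
  fderiv ℝ (fun y => fderiv ℝ u y v) x v

/-- `D` is a bounded domain with `C²` boundary, described by a `C²` defining
function `u` on a neighborhood `U` of `∂D` with nonvanishing differential. -/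
def IsC2BoundedDomain {d : ℕ} (D : Set (Euc d)) : Prop :=
  IsOpen D ∧ IsConnected D ∧ Bornology.IsBounded D ∧
  ∃ (U : Set (Euc d)) (u : Euc d → ℝ), IsOpen U ∧ frontier D ⊆ U ∧ ContDiffOn ℝ 2 u U ∧
    D ∩ U = {x | x ∈ U ∧ u x < 0} ∧ frontier D = {x | x ∈ U ∧ u x = 0} ∧
    ∀ x ∈ frontier D, fderiv ℝ u x ≠ 0

/-- `D` is a bounded strongly minimally convex domain: it has a `C²` defining function
which is strongly minimally plurisubharmonic near `∂D`, i.e. the trace of its Hessian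
on every 2-plane (spanned by an orthonormal pair `v, w`) is strictly positive. -/
def IsStronglyMinimallyConvex {d : ℕ} (D : Set (Euc d)) : Prop :=
  IsOpen D ∧ IsConnected D ∧ Bornology.IsBounded D ∧
  ∃ (U : Set (Euc d)) (u : Euc d → ℝ), IsOpen U ∧ frontier D ⊆ U ∧ ContDiffOn ℝ 2 u U ∧
    D ∩ U = {x | x ∈ U ∧ u x < 0} ∧ frontier D = {x | x ∈ U ∧ u x = 0} ∧
    (∀ x ∈ frontier D, fderiv ℝ u x ≠ 0) ∧
    (∀ x ∈ U, ∀ v w : Euc d, ‖v‖ = 1 → ‖w‖ = 1 → ⟪v, w⟫ = 0 →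
      0 < hessQ u x v + hessQ u x w)

/-- `D` is a bounded strongly convex domain: convex, with a `C²` defining function whose
Hessian is positive definite on the tangent space at every boundary point
(equivalently, all principal curvatures of `∂D` w.r.t. the inner normal are positive). -/
def IsStronglyConvexDomain {d : ℕ} (D : Set (Euc d)) : Prop :=
  IsOpen D ∧ IsConnected D ∧ Bornology.IsBounded D ∧ Convex ℝ D ∧
  ∃ (U : Set (Euc d)) (u : Euc d → ℝ), IsOpen U ∧ frontier D ⊆ U ∧ ContDiffOn ℝ 2 u U ∧
    D ∩ U = {x | x ∈ U ∧ u x < 0} ∧ frontier D = {x | x ∈ U ∧ u x = 0} ∧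
    (∀ x ∈ frontier D, fderiv ℝ u x ≠ 0) ∧
    (∀ ξ ∈ frontier D, ∀ w : Euc d, w ≠ 0 → fderiv ℝ u ξ w = 0 → 0 < hessQ u ξ w)

/-- For `x ∈ D` with nearest boundary point `p`, the outer unit normal direction
`n_{π(x)} = (p - x)/‖p - x‖`. -/
def nvec {d : ℕ} (x p : Euc d) : Euc d := ‖p - x‖⁻¹ • (p - x)

/-- Normal component of `v` at `x` with nearest boundary point `p`. -/
def vN {d : ℕ} (x p v : Euc d) : Euc d := ⟪v, nvec x p⟫ • nvec x p

/-- Tangential component of `v` at `x` with nearest boundary point `p`. -/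
def vT {d : ℕ} (x p v : Euc d) : Euc d := v - vN x p v

/-- The intrinsic distance `H` on the boundary `∂D`: infimum of Euclidean lengths of
piecewise `C¹` curves in `∂D` joining two boundary points. -/
def bdist {d : ℕ} (D : Set (Euc d)) (ξ η : Euc d) : ℝ :=
  sInf {L : ℝ | ∃ α : ℝ → Euc d, PiecewiseC1On α 0 1 ∧
    (∀ t ∈ Set.Icc (0:ℝ) 1, α t ∈ frontier D) ∧ α 0 = ξ ∧ α 1 = η ∧
    L = ∫ t in (0:ℝ)..(1:ℝ), ‖deriv α t‖}

/-- `h(x) = δ_D(x)^{1/2}`. -/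
def hfun {d : ℕ} (D : Set (Euc d)) (x : Euc d) : ℝ :=
  Real.sqrt (Metric.infDist x (frontier D))

/-- The length of a curve with respect to the boundary Finsler metric
`F(x,v) = ‖v_N‖/(2 δ_D(x)) + ‖v_T‖/δ_D(x)^{1/2}`. -/
def Flen {d : ℕ} (D : Set (Euc d)) (π : Euc d → Euc d) (γ : ℝ → Euc d) : ℝ :=
  ∫ t in (0:ℝ)..(1:ℝ),
    (‖vN (γ t) (π (γ t)) (deriv γ t)‖ / (2 * Metric.infDist (γ t) (frontier D))
      + ‖vT (γ t) (π (γ t)) (deriv γ t)‖ / Real.sqrt (Metric.infDist (γ t) (frontier D)))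

/-- The filling Finsler metric `F`: the boundary Finsler metric on
`N = {δ_D ≤ ε}` and `c‖v‖` elsewhere. -/
def Fmet {d : ℕ} (D : Set (Euc d)) (π : Euc d → Euc d) (ε c : ℝ) (x v : Euc d) : ℝ :=
  if Metric.infDist x (frontier D) ≤ ε then
    ‖vN x (π x) v‖ / (2 * Metric.infDist x (frontier D))
      + ‖vT x (π x) v‖ / Real.sqrt (Metric.infDist x (frontier D))
  else c * ‖v‖

/-- The intrinsic distance `d_F` associated to the filling Finsler metric `F`. -/
def dF {d : ℕ} (D : Set (Euc d)) (π : Euc d → Euc d) (ε c : ℝ) (x y : Euc d) : ℝ :=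
  sInf {L : ℝ | ∃ γ : ℝ → Euc d, PiecewiseC1On γ 0 1 ∧
    (∀ t ∈ Set.Icc (0:ℝ) 1, γ t ∈ D) ∧ γ 0 = x ∧ γ 1 = y ∧
    L = ∫ t in (0:ℝ)..(1:ℝ), Fmet D π ε c (γ t) (deriv γ t)}

/-- The hyperbolic filling distance
`d_H(x,y) = 2 log((H(π x, π y) + h(x) ∨ h(y)) / √(h(x) h(y)))`. -/
def dH {d : ℕ} (D : Set (Euc d)) (π : Euc d → Euc d) (x y : Euc d) : ℝ :=
  2 * Real.log ((bdist D (π x) (π y) + max (hfun D x) (hfun D y)) /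
    Real.sqrt (hfun D x * hfun D y))

/-- `δ̂_D(x,v)`: the supremum over 2-dimensional linear subspaces `Λ ∋ v` of the
distance (in `ℝ≥0∞`, so `∞` if `x + Λ ⊆ D`) from `x` to `(x + Λ) \ D`. -/
def deltaHat {d : ℕ} (D : Set (Euc d)) (x v : Euc d) : ℝ≥0∞ :=
  ⨆ (Λ : Submodule ℝ (Euc d)) (_ : Module.finrank ℝ Λ = 2) (_ : v ∈ Λ),
    ⨅ (y : Euc d) (_ : y - x ∈ Λ ∧ y ∉ D), edist x y

/-- The positive parameter at which the ray `t ↦ x + t • v` exits the convex domain `D`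
(equal to `0`, by the `sInf ∅ = 0` convention, when the ray stays in `D`,
i.e. when the corresponding chord endpoint is the point at infinity). -/
def chordParam {d : ℕ} (D : Set (Euc d)) (x v : Euc d) : ℝ :=
  sInf {s : ℝ | 0 < s ∧ x + s • v ∉ D}

/-- The Hilbert Finsler metric `h_D(x,v) = (‖v‖/2)(1/‖x-a‖ + 1/‖x-b‖)` of a convex
domain, with the convention `1/‖x-∞‖ = 0` (here `‖x-b‖ = chordParam D x v • ‖v‖` and
`‖x-a‖ = chordParam D x (-v) • ‖v‖`, and division by zero is zero). -/
def hilbertFinsler {d : ℕ} (D : Set (Euc d)) (x v : Euc d) : ℝ :=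
  (1/2) * (1 / chordParam D x v + 1 / chordParam D x (-v))

/- The Hilbert distance of a convex domain: for `x ≠ y`,
`H_D(x,y) = ½ log((‖x-b‖ ‖y-a‖)/(‖x-a‖ ‖y-b‖))` where `a, x, y, b` are aligned on the
chord through `x, y`, with the convention that ratios involving the point at infinity
(detected by `chordParam = 0`) are equal to `1`. -/
open Classical in
def hilbertDist {d : ℕ} (D : Set (Euc d)) (x y : Euc d) : ℝ :=
  if x = y then 0 else
    (1/2) * Real.log
      ((if chordParam D x (y - x) = 0 then 1
        else chordParam D x (y - x) / (chordParam D x (y - x) - 1)) *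
       (if chordParam D x (x - y) = 0 then 1
        else (1 + chordParam D x (x - y)) / chordParam D x (x - y)))

/-!
Strong convexity traps `D` in a ball of uniform radius tangent at each boundary point `p`:
`c * ‖p - y‖ ^ 2 ≤ ⟪p - y, n⟫` for `y ∈ D`. Put `y = x + s • v` with `p` nearest to `x`, at distance
`δ`. If `⟪v, n⟫ ≥ 0`, the right-hand side is `δ - s * ⟪v, n⟫` and the left-hand side is at least
`c * s ^ 2 * ‖v_T‖ ^ 2`, so the ray leaves `D` no later than `s = δ / ⟪v, n⟫` and
`s = √δ / (√c * ‖v_T‖)`. Replacing `v` by `-v` swaps the two ends of the chord.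

For the tangent balls, compactness of `∂D × sphere 0 1` gives a uniform dichotomy: along a short
segment from `p` in a unit direction `w`, either `|du_p w|` is bounded below or the Hessian of the
defining function `u` is. In the second case Taylor's formula and `u ≤ 0` on the closed domain
bound `-du_p w` below by a multiple of the length, and convexity carries the estimate from short
chords to all of `D`. The gradient of `u` at `p` is a nonnegative multiple of `p - x` because the
ball about `x` through `p` lies in the closed domain.
-/

section SecondOrder

variable {E : Type*} [NormedAddCommGroup E] [NormedSpace ℝ E] {S U K : Set E} {u : E → ℝ}

lemma add_mul_add_sq_le_of_le_deriv2 {f f' f'' : ℝ → ℝ} {m r : ℝ} (hr : 0 ≤ r)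
    (hf : ∀ s ∈ Icc 0 r, HasDerivAt f (f' s) s) (hf' : ∀ s ∈ Icc 0 r, HasDerivAt f' (f'' s) s)
    (hm : ∀ s ∈ Icc 0 r, m ≤ f'' s) :
    f 0 + f' 0 * r + m / 2 * r ^ 2 ≤ f r := by
  rcases hr.eq_or_lt with rfl | hr
  · simp
  have hg : ∀ s ∈ Icc 0 r, HasDerivAt (fun s => f s - m / 2 * s ^ 2) (f' s - m * s) s :=
    fun s hs => ((hf s hs).sub ((hasDerivAt_pow 2 s).const_mul (m / 2))).congr_deriv (by
      push_cast; ring)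
  have hg' : ∀ s ∈ Icc 0 r, HasDerivAt (fun s => f' s - m * s) (f'' s - m) s :=
    fun s hs => ((hf' s hs).sub ((hasDerivAt_id s).const_mul m)).congr_deriv (by ring)
  have hconv : ConvexOn ℝ (Icc 0 r) (fun s => f s - m / 2 * s ^ 2) :=
    convexOn_of_hasDerivWithinAt2_nonneg (convex_Icc 0 r)
      (fun s hs => (hg s hs).continuousAt.continuousWithinAt)
      (fun s hs => (hg s (interior_subset hs)).hasDerivWithinAt)
      (fun s hs => (hg' s (interior_subset hs)).hasDerivWithinAt)
      (fun s hs => sub_nonneg.2 (hm s (interior_subset hs)))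
  have h0 : (0 : ℝ) ∈ Icc 0 r := left_mem_Icc.2 hr.le
  have hslope := hconv.le_slope_of_hasDerivAt h0 (right_mem_Icc.2 hr.le) hr (hg 0 h0)
  rw [slope_def_field, le_div_iff₀ (by linarith)] at hslope
  linarith

lemma add_fderiv_add_sq_le_of_le_fderiv_fderiv {p w : E} {m r : ℝ} (hr : 0 ≤ r)
    (hu : ∀ s ∈ Icc 0 r, ContDiffAt ℝ 2 u (p + s • w))
    (hm : ∀ s ∈ Icc 0 r, m ≤ fderiv ℝ (fderiv ℝ u) (p + s • w) w w) :
    u p + fderiv ℝ u p w * r + m / 2 * r ^ 2 ≤ u (p + r • w) := by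
  have hline (s : ℝ) : HasDerivAt (fun s : ℝ => p + s • w) w s := by
    simpa using ((hasDerivAt_id s).smul_const w).const_add p
  have h1 : ∀ s ∈ Icc 0 r,
      HasDerivAt (fun s : ℝ => u (p + s • w)) (fderiv ℝ u (p + s • w) w) s := fun s hs =>
    ((hu s hs).differentiableAt two_ne_zero).hasFDerivAt.comp_hasDerivAt s (hline s)
  have h2 : ∀ s ∈ Icc 0 r, HasDerivAt (fun s : ℝ => fderiv ℝ u (p + s • w) w)
      (fderiv ℝ (fderiv ℝ u) (p + s • w) w w) s := fun s hs => by
    have hu' : DifferentiableAt ℝ (fderiv ℝ u) (p + s • w) :=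
      ((hu s hs).fderiv_right (m := 1) (by norm_num)).differentiableAt one_ne_zero
    exact (ContinuousLinearMap.apply ℝ ℝ w).hasFDerivAt.comp_hasDerivAt s
      (hu'.hasFDerivAt.comp_hasDerivAt s (hline s))
  simpa only [zero_smul, add_zero] using add_mul_add_sq_le_of_le_deriv2
    (f := fun s => u (p + s • w)) (f' := fun s => fderiv ℝ u (p + s • w) w)
    (f'' := fun s => fderiv ℝ (fderiv ℝ u) (p + s • w) w w) hr h1 h2 hm

lemma fderiv_sub_nonpos_of_isLocalMaxOn {p y : E} (hS : Convex ℝ S) (hp : p ∈ S) (hy : y ∈ S)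
    (hu : DifferentiableAt ℝ u p) (hmax : IsLocalMaxOn u S p) : fderiv ℝ u p (y - p) ≤ 0 :=
  hmax.hasFDerivWithinAt_nonpos hu.hasFDerivAt.hasFDerivWithinAt
    (sub_mem_posTangentConeAt_of_segment_subset (hS.segment_subset hp hy))

lemma eventually_le_abs_fderiv_or_le_fderiv_fderiv [ProperSpace E] (hK : IsCompact K)
    (hu : ∀ p ∈ K, ContDiffAt ℝ 2 u p) (hU : ∀ p ∈ K, U ∈ nhds p)
    (hpos : ∀ p ∈ K, ∀ w ≠ 0, fderiv ℝ u p w = 0 → 0 < fderiv ℝ (fderiv ℝ u) p w w) :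
    ∀ᶠ c in nhdsWithin (0 : ℝ) (Ioi 0), ∀ p ∈ K, ∀ w ∈ sphere (0 : E) 1,
      c ≤ |fderiv ℝ u p w| ∨
        ∀ s ∈ Icc 0 c, p + s • w ∈ U ∧ c ≤ fderiv ℝ (fderiv ℝ u) (p + s • w) w w := by
  have hnear : ∀ᶠ q : ℝ × ℝ in nhds 0, ∀ z ∈ K ×ˢ sphere (0 : E) 1,
      z.1 + q.1 • z.2 ∈ U ∧
        q.2 < max |fderiv ℝ u z.1 z.2| (fderiv ℝ (fderiv ℝ u) (z.1 + q.1 • z.2) z.2 z.2) := by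
    refine (hK.prod (isCompact_sphere 0 1)).eventually_forall_of_forall_eventually ?_
    rintro ⟨p, w⟩ ⟨hp, hw⟩
    have hpoint : ContinuousAt (fun a : (ℝ × ℝ) × E × E => a.2.1 + a.1.1 • a.2.2) (0, p, w) := by
      fun_prop
    have hpoint0 : p + (0 : ℝ) • w = p := by simp
    have hu1 := (hu p hp).fderiv_right (m := 1) (by norm_num)
    have hD1 : ContinuousAt (fun a : (ℝ × ℝ) × E × E => fderiv ℝ u a.2.1 a.2.2) (0, p, w) :=
      (hu1.continuousAt.comp (f := fun a : (ℝ × ℝ) × E × E => a.2.1) (x := (0, p, w))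
        (by fun_prop)).clm_apply (by fun_prop)
    have hD2 : ContinuousAt (fun a : (ℝ × ℝ) × E × E =>
        fderiv ℝ (fderiv ℝ u) (a.2.1 + a.1.1 • a.2.2) a.2.2 a.2.2) (0, p, w) :=
      ((ContinuousAt.comp_of_eq (hu1.fderiv_right (m := 0) (by norm_num)).continuousAt
        hpoint hpoint0).clm_apply (by fun_prop)).clm_apply (by fun_prop)
    have hmax : 0 < max |fderiv ℝ u p w| (fderiv ℝ (fderiv ℝ u) (p + (0 : ℝ) • w) w w) := by
      rw [hpoint0, lt_max_iff, abs_pos, or_iff_not_imp_left, not_not]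
      exact hpos p hp w (ne_zero_of_mem_unit_sphere ⟨w, hw⟩)
    exact (hpoint.eventually_mem (by simpa using hU p hp)).and
      (ContinuousAt.eventually_lt (by fun_prop) (hD1.abs.max hD2) hmax)
  obtain ⟨η, hη, hball⟩ := Metric.eventually_nhds_iff_ball.1 hnear
  filter_upwards [Ioo_mem_nhdsGT hη] with c ⟨hc, hcη⟩ p hp w hw
  refine or_iff_not_imp_left.2 fun hlt s hs => ?_
  obtain ⟨hsU, hlt'⟩ := hball (s, c)
    (by simpa [Prod.dist_eq, abs_of_pos hc, abs_of_nonneg hs.1] using ⟨hs.2.trans_lt hcη, hcη⟩)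
    (p, w) ⟨hp, hw⟩
  exact ⟨hsU, ((lt_max_iff.1 hlt').resolve_left fun h => hlt h.le).le⟩

lemma exists_mul_le_neg_fderiv [ProperSpace E] (hS : Convex ℝ S) (hU : IsOpen U)
    (hu : ContDiffOn ℝ 2 u U) (hK : IsCompact K) (hKS : K ⊆ S) (hKU : K ⊆ U)
    (hmax : ∀ p ∈ K, IsMaxOn u (S ∩ U) p)
    (hpos : ∀ p ∈ K, ∀ w ≠ 0, fderiv ℝ u p w = 0 → 0 < fderiv ℝ (fderiv ℝ u) p w w) :
    ∃ c > 0, ∀ p ∈ K, ∀ w ∈ sphere (0 : E) 1, ∀ r ∈ Ioc 0 c, p + r • w ∈ S →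
      c / 2 * r ≤ -fderiv ℝ u p w := by
  have hu' : ∀ y ∈ U, ContDiffAt ℝ 2 u y := fun y hy => hu.contDiffAt (hU.mem_nhds hy)
  obtain ⟨c, hdich, hc, hc1⟩ := ((eventually_le_abs_fderiv_or_le_fderiv_fderiv hK
    (fun p hp => hu' p (hKU hp)) (fun p hp => hU.mem_nhds (hKU hp)) hpos).and
      (Ioc_mem_nhdsGT one_pos)).exists
  refine ⟨c, hc, fun p hp w hw r ⟨hr, hrc⟩ hrS => ?_⟩
  have hlocmax : IsLocalMaxOn u S p := by
    filter_upwards [self_mem_nhdsWithin, mem_nhdsWithin_of_mem_nhds (hU.mem_nhds (hKU hp))]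
      with y hyS hyU using hmax p hp ⟨hyS, hyU⟩
  have hsupp : fderiv ℝ u p w ≤ 0 := by
    have := fderiv_sub_nonpos_of_isLocalMaxOn hS (hKS hp) hrS
      ((hu' p (hKU hp)).differentiableAt two_ne_zero) hlocmax
    rw [add_sub_cancel_left, map_smul, smul_eq_mul] at this
    exact nonpos_of_mul_nonpos_right this hr
  rcases hdich p hp w hw with htrans | htan
  · rw [abs_of_nonpos hsupp] at htrans
    nlinarith
  · have hseg : ∀ s ∈ Icc 0 r, p + s • w ∈ U ∧ c ≤ fderiv ℝ (fderiv ℝ u) (p + s • w) w w :=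
      fun s hs => htan s ⟨hs.1, hs.2.trans hrc⟩
    have htaylor := add_fderiv_add_sq_le_of_le_fderiv_fderiv hr.le
      (fun s hs => hu' _ (hseg s hs).1) (fun s hs => (hseg s hs).2)
    have hle : u (p + r • w) ≤ u p := hmax p hp ⟨hrS, (hseg r ⟨hr.le, le_rfl⟩).1⟩
    have : (fderiv ℝ u p w + c / 2 * r) * r ≤ 0 := by linarith
    linarith [nonpos_of_mul_nonpos_left this hr]

lemma exists_mul_norm_sub_sq_le_neg_fderiv [ProperSpace E] (hS : Convex ℝ S)
    (hSb : Bornology.IsBounded S) (hU : IsOpen U)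
    (hu : ContDiffOn ℝ 2 u U) (hK : IsCompact K) (hKS : K ⊆ S) (hKU : K ⊆ U)
    (hmax : ∀ p ∈ K, IsMaxOn u (S ∩ U) p)
    (hpos : ∀ p ∈ K, ∀ w ≠ 0, fderiv ℝ u p w = 0 → 0 < fderiv ℝ (fderiv ℝ u) p w w) :
    ∃ c > 0, ∀ p ∈ K, ∀ y ∈ S, c * ‖y - p‖ ^ 2 ≤ -fderiv ℝ u p (y - p) := by
  obtain ⟨c, hc, hray⟩ := exists_mul_le_neg_fderiv hS hU hu hK hKS hKU hmax hpos
  obtain ⟨M, hM⟩ := Metric.isBounded_iff.1 hSb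
  have hcM : 0 < max c M := lt_max_of_lt_left hc
  refine ⟨c / 2 * (c / max c M), by positivity, fun p hp y hy => ?_⟩
  rcases eq_or_ne y p with rfl | hne
  · simp
  have hR : 0 < ‖y - p‖ := norm_pos_iff.2 (sub_ne_zero.2 hne)
  have hRM : ‖y - p‖ ≤ max c M :=
    (dist_eq_norm y p ▸ hM hy (hKS hp)).trans (le_max_right c M)
  have hshrink : p + (c / max c M * ‖y - p‖) • (‖y - p‖⁻¹ • (y - p)) ∈ S := by
    rw [smul_smul, mul_assoc, mul_inv_cancel₀ hR.ne', mul_one]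
    exact hS.add_smul_sub_mem (hKS hp) hy
      ⟨by positivity, div_le_one_of_le₀ (le_max_left c M) hcM.le⟩
  have hrc : c / max c M * ‖y - p‖ ≤ c := by
    rw [div_mul_eq_mul_div, div_le_iff₀ hcM]
    gcongr
  have hunit : ‖y - p‖⁻¹ • (y - p) ∈ sphere (0 : E) 1 := by
    rw [mem_sphere_zero_iff_norm, norm_smul, norm_inv, norm_norm, inv_mul_cancel₀ hR.ne']
  have hbound := hray p hp _ hunit _ ⟨by positivity, hrc⟩ hshrink
  calc c / 2 * (c / max c M) * ‖y - p‖ ^ 2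
      = ‖y - p‖ * (c / 2 * (c / max c M * ‖y - p‖)) := by ring
    _ ≤ ‖y - p‖ * -fderiv ℝ u p (‖y - p‖⁻¹ • (y - p)) := by gcongr
    _ = -fderiv ℝ u p (y - p) := by
      rw [map_smul, smul_eq_mul]
      field_simp

end SecondOrder

lemma ball_infDist_frontier_subset {E : Type*} [NormedAddCommGroup E] [NormedSpace ℝ E]
    {D : Set E} {x : E} (hD : IsOpen D) (hx : x ∈ D) : ball x (infDist x (frontier D)) ⊆ D := by
  rcases (infDist_nonneg (x := x) (s := frontier D)).eq_or_lt with h0 | hpos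
  · simp [← h0]
  refine (convex_ball x _).isPreconnected.subset_of_closure_inter_subset hD
    ⟨x, mem_ball_self hpos, hx⟩ fun y ⟨hy, hyball⟩ => by_contra fun hyD => ?_
  exact disjoint_left.1 disjoint_ball_infDist hyball (hD.frontier_eq ▸ ⟨hy, hyD⟩)

lemma norm_sub_smul_eq_of_inner_le {E : Type*} [NormedAddCommGroup E] [InnerProductSpace ℝ E]
    {g x p : E} (h : ∀ z ∈ closedBall x ‖p - x‖, ⟪g, z⟫ ≤ ⟪g, p⟫) :
    ‖p - x‖ • g = ‖g‖ • (p - x) := by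
  rcases eq_or_ne g 0 with rfl | hg
  · simp
  rw [← inner_eq_norm_mul_iff_real]
  refine le_antisymm (real_inner_le_norm g (p - x)) ?_
  have hg0 : ‖g‖ ≠ 0 := norm_ne_zero_iff.2 hg
  have hz := h (x + (‖p - x‖ / ‖g‖) • g) (by simp [norm_smul, hg0])
  rw [inner_add_right, inner_smul_right, real_inner_self_eq_norm_sq] at hz
  rw [inner_sub_right]
  have : ‖p - x‖ / ‖g‖ * ‖g‖ ^ 2 = ‖g‖ * ‖p - x‖ := by field_simp
  linarith

section NormalTangential

variable {d : ℕ} {x p : Euc d}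

lemma norm_nvec (hxp : x ≠ p) : ‖nvec x p‖ = 1 :=
  norm_smul_inv_norm (𝕜 := ℝ) (sub_ne_zero.2 hxp.symm)

lemma norm_vN (hxp : x ≠ p) (v : Euc d) : ‖vN x p v‖ = |⟪v, nvec x p⟫| := by
  rw [vN, norm_smul, norm_nvec hxp, mul_one, Real.norm_eq_abs]

lemma inner_sub_nvec : ⟪p - x, nvec x p⟫ = dist x p := by
  rcases eq_or_ne p x with rfl | hne
  · simp
  have : ‖p - x‖ ≠ 0 := norm_ne_zero_iff.2 (sub_ne_zero.2 hne)
  rw [nvec, inner_smul_right, real_inner_self_eq_norm_sq, dist_eq_norm']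
  field_simp

lemma inner_sub_add_smul_nvec (s : ℝ) (v : Euc d) :
    ⟪p - (x + s • v), nvec x p⟫ = dist x p - s * ⟪v, nvec x p⟫ := by
  rw [← sub_sub, inner_sub_left, inner_sub_nvec, real_inner_smul_left]

lemma vT_sub_add_smul (s : ℝ) (v : Euc d) : vT x p (p - (x + s • v)) = -(s • vT x p v) := by
  have hradial : dist x p • nvec x p = p - x := by
    rcases eq_or_ne p x with rfl | hne
    · simp
    rw [nvec, dist_eq_norm', smul_inv_smul₀ (norm_ne_zero_iff.2 (sub_ne_zero.2 hne))]
  rw [vT, vN, inner_sub_add_smul_nvec, vT, vN, sub_smul, hradial]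
  module

lemma norm_vT_le (hxp : x ≠ p) (v : Euc d) : ‖vT x p v‖ ≤ ‖v‖ := by
  refine abs_le_of_sq_le_sq' ?_ (norm_nonneg v) |>.2
  rw [vT, norm_sub_sq_real, norm_vN hxp, sq_abs, vN, inner_smul_right]
  nlinarith [sq_nonneg ⟪v, nvec x p⟫]

end NormalTangential

section Chord

variable {d : ℕ} {D : Set (Euc d)} {x v : Euc d}

lemma chordParam_nonneg (x v : Euc d) : 0 ≤ chordParam D x v :=
  Real.sInf_nonneg fun _ hs => hs.1.le

lemma hilbertFinsler_neg (x v : Euc d) : hilbertFinsler D x (-v) = hilbertFinsler D x v := by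
  rw [hilbertFinsler, hilbertFinsler, neg_neg, add_comm]

lemma le_one_div_chordParam {k : ℝ} (hD : D ∈ nhds x)
    (hk : ∀ s, 0 < s → x + s • v ∈ D → s * k ≤ 1) : k ≤ 1 / chordParam D x v := by
  rcases le_or_gt k 0 with hk0 | hk0
  · exact hk0.trans (one_div_nonneg.2 (chordParam_nonneg x v))
  have hexit : Ioi (1 / k) ⊆ {s : ℝ | 0 < s ∧ x + s • v ∉ D} := fun s hs =>
    have hs0 : 0 < s := (one_div_pos.2 hk0).trans hs
    ⟨hs0, fun hmem => ((div_lt_iff₀ hk0).1 hs).not_ge (hk s hs0 hmem)⟩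
  have hle : chordParam D x v ≤ 1 / k :=
    (csInf_le_csInf ⟨0, fun _ hs => hs.1.le⟩ nonempty_Ioi hexit).trans_eq csInf_Ioi
  have hstay : ∀ᶠ s : ℝ in nhds 0, x + s • v ∈ D :=
    (show ContinuousAt (fun s : ℝ => x + s • v) 0 by fun_prop).eventually_mem (by simpa using hD)
  obtain ⟨η, hη, hball⟩ := Metric.eventually_nhds_iff.1 hstay
  have hpos : 0 < chordParam D x v :=
    hη.trans_le (le_csInf (nonempty_Ioi.mono hexit) fun s hs =>
      le_of_not_gt fun hlt => hs.2 (hball (by simpa [abs_of_pos hs.1] using hlt)))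
  exact (le_one_div hk0 hpos).2 hle

lemma le_two_mul_hilbertFinsler {k : ℝ} (hD : D ∈ nhds x)
    (hk : ∀ s, 0 < s → x + s • v ∈ D → s * k ≤ 1) : k ≤ 2 * hilbertFinsler D x v := by
  have hpos := le_one_div_chordParam hD hk
  have hneg : 0 ≤ 1 / chordParam D x (-v) := one_div_nonneg.2 (chordParam_nonneg x (-v))
  rw [hilbertFinsler]
  linarith

end Chord

section TangentBall

variable {d : ℕ} {D : Set (Euc d)} {x p : Euc d}

/-- `D` lies in the closed ball of radius `1 / (2 * c)` tangent at `p` to the hyperplane with outer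
unit normal `n`, that is, centred at `p - (1 / (2 * c)) • n`. The squared distance to the centre is
expanded, so that `c = 0` gives the supporting half-space. -/
def LiesInTangentBall (D : Set (Euc d)) (p n : Euc d) (c : ℝ) : Prop :=
  ∀ y ∈ D, c * ‖p - y‖ ^ 2 ≤ ⟪p - y, n⟫

lemma norm_vN_div_le_hilbertFinsler {c : ℝ} (hD : D ∈ nhds x) (hxp : x ≠ p) (hc : 0 ≤ c)
    (hball : LiesInTangentBall D p (nvec x p) c) (v : Euc d) :
    ‖vN x p v‖ / (2 * dist x p) ≤ hilbertFinsler D x v := by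
  have hδ : 0 < dist x p := dist_pos.2 hxp
  have houter (v : Euc d) : ⟪v, nvec x p⟫ / dist x p ≤ 2 * hilbertFinsler D x v :=
    le_two_mul_hilbertFinsler hD fun s _ hmem => by
      have h := hball _ hmem
      rw [inner_sub_add_smul_nvec] at h
      have : 0 ≤ c * ‖p - (x + s • v)‖ ^ 2 := by positivity
      rw [← mul_div_assoc, div_le_one hδ]
      linarith
  have habs : |⟪v, nvec x p⟫| / dist x p ≤ 2 * hilbertFinsler D x v := by
    rcases abs_choice ⟪v, nvec x p⟫ with h | h <;> rw [h]
    · exact houter v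
    · simpa only [inner_neg_left, hilbertFinsler_neg] using houter (-v)
  rw [norm_vN hxp, mul_comm, ← div_div]
  linarith

lemma sqrt_mul_norm_vT_div_le_hilbertFinsler {c : ℝ} (hD : D ∈ nhds x) (hxp : x ≠ p)
    (hc : 0 ≤ c) (hball : LiesInTangentBall D p (nvec x p) c) (v : Euc d) :
    √c * (‖vT x p v‖ / √(dist x p)) ≤ 2 * hilbertFinsler D x v := by
  wlog hv : 0 ≤ ⟪v, nvec x p⟫ generalizing v
  · have hneg : vT x p (-v) = -vT x p v := by
      rw [vT, vT, vN, vN, inner_neg_left]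
      module
    simpa only [hneg, norm_neg, hilbertFinsler_neg] using
      this (-v) (by rw [inner_neg_left]; linarith)
  have hδ : 0 < √(dist x p) := Real.sqrt_pos.2 (dist_pos.2 hxp)
  refine le_two_mul_hilbertFinsler hD fun s hs hmem => ?_
  have htan : s * ‖vT x p v‖ ≤ ‖p - (x + s • v)‖ := by
    simpa [vT_sub_add_smul, norm_smul, abs_of_pos hs] using norm_vT_le hxp (p - (x + s • v))
  have hsq : c * (s * ‖vT x p v‖) ^ 2 ≤ dist x p := calc
    c * (s * ‖vT x p v‖) ^ 2 ≤ c * ‖p - (x + s • v)‖ ^ 2 := by gcongr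
    _ ≤ ⟪p - (x + s • v), nvec x p⟫ := hball _ hmem
    _ ≤ dist x p := by
      rw [inner_sub_add_smul_nvec]
      linarith [mul_nonneg hs.le hv]
  calc s * (√c * (‖vT x p v‖ / √(dist x p)))
      = √(c * (s * ‖vT x p v‖) ^ 2) / √(dist x p) := by
        rw [Real.sqrt_mul hc, Real.sqrt_sq (by positivity)]
        ring
    _ ≤ 1 := (div_le_one hδ).2 (Real.sqrt_le_sqrt hsq)

end TangentBall

section DefiningFunction

variable {d : ℕ} {D U : Set (Euc d)} {u : Euc d → ℝ}

lemma isMaxOn_of_mem_frontier (hDU : D ∩ U = {x | x ∈ U ∧ u x < 0})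
    (hfr : frontier D = {x | x ∈ U ∧ u x = 0}) {p : Euc d} (hp : p ∈ frontier D) :
    IsMaxOn u (closure D ∩ U) p := by
  rintro y ⟨hy, hyU⟩
  rw [hfr] at hp
  change u y ≤ u p
  rw [hp.2]
  rw [closure_eq_self_union_frontier] at hy
  rcases hy with hy | hy
  · exact (hDU.le ⟨hy, hyU⟩).2.le
  · exact (hfr.le hy).2.le

lemma hessQ_eq_fderiv_fderiv {y : Euc d} (hu : ContDiffAt ℝ 2 u y) (w : Euc d) :
    hessQ u y w = fderiv ℝ (fderiv ℝ u) y w w := by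
  have hu' : DifferentiableAt ℝ (fderiv ℝ u) y :=
    (hu.fderiv_right (m := 1) (by norm_num)).differentiableAt one_ne_zero
  simp [hessQ, fderiv_clm_apply hu' (differentiableAt_const w)]

lemma gradient_eq_norm_smul_nvec {x p : Euc d} (hD : IsOpen D) (hx : x ∈ D) (hxp : x ≠ p)
    (hdist : dist x p = infDist x (frontier D))
    (hsupp : ∀ y ∈ closure D, fderiv ℝ u p (y - p) ≤ 0) :
    gradient u p = ‖gradient u p‖ • nvec x p := by
  have hδ : ‖p - x‖ ≠ 0 := norm_ne_zero_iff.2 (sub_ne_zero.2 hxp.symm)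
  have hball : closedBall x ‖p - x‖ ⊆ closure D := by
    rw [← closure_ball x hδ, ← dist_eq_norm', hdist]
    exact closure_mono (ball_infDist_frontier_subset hD hx)
  have h := norm_sub_smul_eq_of_inner_le (g := gradient u p) fun z hz => by
    rw [← sub_nonpos, ← inner_sub_right, gradient, InnerProductSpace.toDual_symm_apply]
    exact hsupp z (hball hz)
  rw [nvec, smul_comm, ← h, inv_smul_smul₀ hδ]

end DefiningFunction

theorem IsStronglyConvexDomain.exists_liesInTangentBall {d : ℕ} {D : Set (Euc d)}
    (hD : IsStronglyConvexDomain D) :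
    ∃ c > 0, ∀ x ∈ D, ∀ p ∈ frontier D, dist x p = infDist x (frontier D) →
      LiesInTangentBall D p (nvec x p) c := by
  obtain ⟨hopen, -, hbdd, hconv, U, u, hU, hfrU, hu, hDU, hfr, hdu, hhess⟩ := hD
  have hK : IsCompact (frontier D) := Metric.isCompact_of_isClosed_isBounded isClosed_frontier
    (hbdd.closure.subset frontier_subset_closure)
  obtain ⟨c, hc, hquad⟩ := exists_mul_norm_sub_sq_le_neg_fderiv hconv.closure hbdd.closure hU hu hK
    frontier_subset_closure hfrU (fun p hp => isMaxOn_of_mem_frontier hDU hfr hp)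
    fun p hp w hw hdw => by
      rw [← hessQ_eq_fderiv_fderiv (hu.contDiffAt (hU.mem_nhds (hfrU hp)))]
      exact hhess p hp w hw hdw
  obtain ⟨G, hG⟩ := hK.exists_bound_of_continuousOn
    ((hu.continuousOn_fderiv_of_isOpen hU (by norm_num)).mono hfrU)
  refine ⟨c / max G 1, by positivity, fun x hx p hp hdist y hy => ?_⟩
  have hxp : x ≠ p := ((disjoint_frontier_iff_isOpen.2 hopen).ne_of_mem hp hx).symm
  have hsupp : ∀ z ∈ closure D, fderiv ℝ u p (z - p) ≤ 0 := fun z hz =>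
    neg_nonneg.1 (le_trans (by positivity) (hquad p hp z hz))
  have hnormal : c * ‖p - y‖ ^ 2 ≤ ‖fderiv ℝ u p‖ * ⟪p - y, nvec x p⟫ := calc
    c * ‖p - y‖ ^ 2 ≤ ⟪gradient u p, p - y⟫ := by
      rw [gradient, InnerProductSpace.toDual_symm_apply, norm_sub_rev, ← neg_sub y p, map_neg]
      exact hquad p hp y (subset_closure hy)
    _ = ‖fderiv ℝ u p‖ * ⟪p - y, nvec x p⟫ := by
      rw [gradient_eq_norm_smul_nvec hopen hx hxp hdist hsupp, real_inner_smul_left,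
        real_inner_comm, gradient, LinearIsometryEquiv.norm_map]
  have hinner : 0 ≤ ⟪p - y, nvec x p⟫ :=
    nonneg_of_mul_nonneg_right (le_trans (by positivity) hnormal) (norm_pos_iff.2 (hdu p hp))
  rw [div_mul_eq_mul_div, div_le_iff₀' (by positivity)]
  exact hnormal.trans (mul_le_mul_of_nonneg_right ((hG p hp).trans (le_max_left G 1)) hinner)

theorem hilbert_metric_boundary_lower_estimate_general {d : ℕ} {D : Set (Euc d)}
    (hD : IsStronglyConvexDomain D) :
    ∃ A : ℝ, 1 ≤ A ∧
      ∀ x ∈ D, ∀ p ∈ frontier D, dist x p = infDist x (frontier D) → ∀ v : Euc d,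
        A⁻¹ * (‖vN x p v‖ / (2 * infDist x (frontier D))
            + ‖vT x p v‖ / √(infDist x (frontier D)))
          ≤ hilbertFinsler D x v := by
  obtain ⟨c, hc, hball⟩ := hD.exists_liesInTangentBall
  have hA : 1 ≤ 1 + 2 / √c := le_add_of_nonneg_right (by positivity)
  refine ⟨1 + 2 / √c, hA, fun x hx p hp hdist v => ?_⟩
  have hxD : D ∈ nhds x := hD.1.mem_nhds hx
  have hxp : x ≠ p := ((disjoint_frontier_iff_isOpen.2 hD.1).ne_of_mem hp hx).symm
  have hN := norm_vN_div_le_hilbertFinsler hxD hxp hc.le (hball x hx p hp hdist) v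
  have hT := sqrt_mul_norm_vT_div_le_hilbertFinsler hxD hxp hc.le (hball x hx p hp hdist) v
  rw [← le_div_iff₀' (Real.sqrt_pos.2 hc)] at hT
  rw [← hdist, inv_mul_le_iff₀ (by positivity)]
  calc _ ≤ hilbertFinsler D x v + 2 * hilbertFinsler D x v / √c := add_le_add hN hT
    _ = (1 + 2 / √c) * hilbertFinsler D x v := by ring

/-- Boundary lower estimate for the Hilbert metric of a strongly convex
domain: `h_D(x,v) ≥ A⁻¹(‖v_N‖/(2δ_D(x)) + ‖v_T‖/δ_D(x)^{1/2})` near the boundary, where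
`p = π(x)` is the nearest boundary point of `x`. -/
theorem hilbert_metric_boundary_lower_estimate
    (d : ℕ) (hd : 2 ≤ d) (D : Set (Euc d)) (hD : IsStronglyConvexDomain D) :
    ∃ ε : ℝ, 0 < ε ∧ ∃ A : ℝ, 1 ≤ A ∧
      ∀ x ∈ D, Metric.infDist x (frontier D) < ε →
        ∀ p ∈ frontier D, dist x p = Metric.infDist x (frontier D) →
          ∀ v : Euc d,
            A⁻¹ * (‖vN x p v‖ / (2 * Metric.infDist x (frontier D))
                + ‖vT x p v‖ / Real.sqrt (Metric.infDist x (frontier D)))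
              ≤ hilbertFinsler D x v := by
  obtain ⟨A, hA, h⟩ := hilbert_metric_boundary_lower_estimate_general hD
  exact ⟨1, one_pos, A, hA, fun x hx _ => h x hx⟩
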